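/- Let n be a positive integer and f : {-1,1}^n → ℝ. For every nonzero ε ∈ [-1,1], we have |(1/ε)·(E_ε[f] − E_0[f]) − ∑_{i=1}^n f̂({i})| ≤ (1/|ε|) · √((1+ε²)^n − (1 + n·ε²)) · √(∑_{|S| ≥ 2} f̂(S)²). -/

import Mathlib

open Finset

/-- The real sign `±1` associated to a Boolean, encoding `{-1,1}`. -/
noncomputable def sgn (b : Bool) : ℝ := if b then 1 else -1

/-- Fourier coefficient `f̂(S) = 2^{-n} ∑_x f(x) ∏_{i∈S} x_i` of `f : {-1,1}^n → ℝ`. -/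
noncomputable def walshCoeff {n : ℕ} (f : (Fin n → Bool) → ℝ) (S : Finset (Fin n)) : ℝ :=
  (2 ^ n : ℝ)⁻¹ * ∑ x : Fin n → Bool, f x * ∏ i ∈ S, sgn (x i)

/-- Expectation of `f` under `ε`-biased coins:
`E_ε[f] = ∑_x f(x) ∏_i (1 + ε·x_i)/2`. -/
noncomputable def biasedExp {n : ℕ} (f : (Fin n → Bool) → ℝ) (ε : ℝ) : ℝ :=
  ∑ x : Fin n → Bool, f x * ∏ i : Fin n, (1 + ε * sgn (x i)) / 2

/-!
Expanding `∏ i, (1 + ε * x i)` over subsets shows that `E_ε[f] = ∑ S, ε ^ |S| * f̂(S)`. The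
terms with `|S| ≤ 1` are `E_0[f] + ε * ∑ i, f̂({i})`, so the error is `ε⁻¹` times the sum over
`|S| ≥ 2`. By Cauchy–Schwarz that sum is at most the `ℓ²` norm of the tail of `f̂` times
the square root of `∑ ε ^ (2 * |S|)` over `|S| ≥ 2`, which the binomial theorem evaluates.
-/

section FinsetSums

variable {ι : Type*}

theorem abs_sum_mul_le_sqrt_mul_sqrt (s : Finset ι) (u v : ι → ℝ) :
    |∑ i ∈ s, u i * v i| ≤ √(∑ i ∈ s, u i ^ 2) * √(∑ i ∈ s, v i ^ 2) := by
  rw [← Real.sqrt_mul (sum_nonneg fun i _ ↦ sq_nonneg (u i))]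
  exact Real.abs_le_sqrt (sum_mul_sq_le_sq_mul_sq s u v)

variable [Fintype ι]

theorem filter_not_two_le_card_eq_cons_map_singleton :
    ({S : Finset ι | ¬2 ≤ #S} : Finset (Finset ι)) =
      (univ.map ⟨singleton, singleton_injective⟩).cons ∅ (by simp) := by
  ext S
  simp [Nat.le_one_iff_eq_zero_or_eq_one, card_eq_one, eq_comm]

theorem sum_eq_empty_add_sum_singleton_add_sum_two_le_card {M : Type*} [AddCommMonoid M]
    (g : Finset ι → M) :
    ∑ S, g S = g ∅ + ∑ i, g {i} + ∑ S with 2 ≤ #S, g S := by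
  rw [← sum_filter_not_add_sum_filter univ (fun S : Finset ι ↦ 2 ≤ #S),
    filter_not_two_le_card_eq_cons_map_singleton, sum_cons, sum_map]
  rfl

theorem sum_two_le_card_pow_card {R : Type*} [CommRing R] (a : R) :
    ∑ S : Finset ι with 2 ≤ #S, a ^ #S =
      (1 + a) ^ Fintype.card ι - (1 + Fintype.card ι * a) := by
  have sum_pow_card : ∑ S : Finset ι, a ^ #S = (1 + a) ^ Fintype.card ι := by
    simpa [add_comm] using Fintype.sum_pow_mul_eq_add_pow ι a 1
  rw [eq_sub_iff_add_eq', ← sum_pow_card, sum_eq_empty_add_sum_singleton_add_sum_two_le_card]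
  simp

end FinsetSums

section BiasedExp

variable {n : ℕ} (f : (Fin n → Bool) → ℝ) (ε : ℝ)

theorem biasedExp_eq_sum_pow_card_mul_walshCoeff :
    biasedExp f ε = ∑ S, ε ^ #S * walshCoeff f S := by
  have prod_eq (x : Fin n → Bool) : ∏ i, (1 + ε * sgn (x i)) / 2 =
      ∑ S : Finset (Fin n), (2 ^ n : ℝ)⁻¹ * (ε ^ #S * ∏ i ∈ S, sgn (x i)) := by
    simp [prod_one_add, prod_mul_distrib, ← mul_sum, div_eq_inv_mul]
  simp only [biasedExp, walshCoeff, prod_eq, mul_sum]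
  rw [sum_comm]
  exact sum_congr rfl fun S _ ↦ sum_congr rfl fun x _ ↦ by ring

theorem biasedExp_zero : biasedExp f 0 = walshCoeff f ∅ := by
  simp [biasedExp, walshCoeff, ← sum_mul, mul_comm]

theorem biasedExp_eq_affine_add_sum_two_le_card :
    biasedExp f ε = biasedExp f 0 + ε * ∑ i, walshCoeff f {i} +
      ∑ S with 2 ≤ #S, ε ^ #S * walshCoeff f S := by
  rw [biasedExp_eq_sum_pow_card_mul_walshCoeff,
    sum_eq_empty_add_sum_singleton_add_sum_two_le_card, biasedExp_zero]
  simp [mul_sum]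

theorem abs_biasedExp_sub_affine_le :
    |biasedExp f ε - (biasedExp f 0 + ε * ∑ i, walshCoeff f {i})| ≤
      √((1 + ε ^ 2) ^ n - (1 + n * ε ^ 2)) * √(∑ S with 2 ≤ #S, walshCoeff f S ^ 2) := by
  have sum_sq_weights : ∑ S : Finset (Fin n) with 2 ≤ #S, (ε ^ #S) ^ 2 =
      (1 + ε ^ 2) ^ n - (1 + n * ε ^ 2) := by
    simp_rw [pow_right_comm ε _ 2]
    rw [sum_two_le_card_pow_card, Fintype.card_fin]
  rw [biasedExp_eq_affine_add_sum_two_le_card f ε, add_sub_cancel_left, ← sum_sq_weights]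
  exact abs_sum_mul_le_sqrt_mul_sqrt _ _ _

variable {ε}

theorem coin_deriv_error_le_tail_general (hε0 : ε ≠ 0) :
    |(1 / ε) * (biasedExp f ε - biasedExp f 0) - ∑ i, walshCoeff f {i}| ≤
      (1 / |ε|) * √((1 + ε ^ 2) ^ n - (1 + n * ε ^ 2)) *
        √(∑ S with 2 ≤ #S, walshCoeff f S ^ 2) := by
  have error_eq : (1 / ε) * (biasedExp f ε - biasedExp f 0) - ∑ i, walshCoeff f {i} =
      (1 / ε) * (biasedExp f ε - (biasedExp f 0 + ε * ∑ i, walshCoeff f {i})) := by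
    field_simp
    ring
  rw [error_eq, abs_mul, abs_one_div, mul_assoc]
  gcongr
  exact abs_biasedExp_sub_affine_le f ε

end BiasedExp

/-- for nonzero ε ∈ [-1,1],
|(1/ε)(E_ε[f]−E_0[f]) − ∑_i f̂({i})|
  ≤ (1/|ε|)·√((1+ε²)^n − (1+nε²))·√(∑_{|S|≥2} f̂(S)²). -/
theorem coin_deriv_error_le_tail (n : ℕ) (hn : 0 < n) (f : (Fin n → Bool) → ℝ)
    (ε : ℝ) (hε0 : ε ≠ 0) (hε : ε ∈ Set.Icc (-1 : ℝ) 1) :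
    |(1 / ε) * (biasedExp f ε - biasedExp f 0) - ∑ i : Fin n, walshCoeff f {i}| ≤
      (1 / |ε|) * Real.sqrt ((1 + ε ^ 2) ^ n - (1 + n * ε ^ 2)) *
        Real.sqrt (∑ S ∈ Finset.univ.filter (fun S : Finset (Fin n) => 2 ≤ S.card),
          walshCoeff f S ^ 2) :=
  coin_deriv_error_le_tail_general f hε0
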